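/- Let A = (Q, Σ, δ) be a DFA and S ⊆ Q, and let M be the DVPDA constructed from A and S as described in the context. Then M has a synchronizing word in the same stack model if and only if there exists a word w ∈ Σ* with δ(Q, w) ⊆ S. -/

import Mathlib

/-- Letters of a visibly pushdown alphabet: call letters (pushing one stack symbol),
internal letters (leaving the stack unchanged), and return letters (popping). -/
inductive VLetter (C I R : Type) : Type
  | call : C → VLetter C I R
  | int  : I → VLetter C I R
  | ret  : R → VLetter C I R

/-- A deterministic visibly push-down automaton over state type `Q`, call letters `C`,
internal letters `I`, return letters `R`, and stack alphabet `Γ` (the symbols other than the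
bottom symbol `⊥`).  A stack is a `List Γ` of the symbols above `⊥`, top at the head; the
bottom symbol `⊥` is implicit.  A return transition receives `none` when `⊥` is the topmost
symbol (it is read but not popped), and `some γ` when `γ ∈ Γ` is on top (which is popped). -/
structure DVPDA (Q C I R Γ : Type) : Type where
  δc : Q → C → Q × Γ
  δi : Q → I → Q
  δr : Q → R → Option Γ → Q

namespace DVPDA

variable {Q C I R Γ : Type}

/-- One step of a DVPDA on a configuration `(q, υ)`. -/
def step (M : DVPDA Q C I R Γ) : Q × List Γ → VLetter C I R → Q × List Γ
  | (q, s), .call c => ((M.δc q c).1, (M.δc q c).2 :: s)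
  | (q, s), .int i  => (M.δi q i, s)
  | (q, []), .ret ρ => (M.δr q ρ none, [])
  | (q, γ :: s), .ret ρ => (M.δr q ρ (some γ), s)

/-- The run of a DVPDA on a word: `(q, υ) →^w M.run (q, υ) w`. -/
def run (M : DVPDA Q C I R Γ) (cfg : Q × List Γ) (w : List (VLetter C I R)) : Q × List Γ :=
  w.foldl M.step cfg

/-- `w` synchronizes `M` in the empty stack model: all runs from `(q, ⊥)` end in the same
state with empty stack. -/
def SyncEmpty (M : DVPDA Q C I R Γ) (w : List (VLetter C I R)) : Prop :=
  ∃ qbar : Q, ∀ q : Q, M.run (q, []) w = (qbar, [])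

/-- `w` synchronizes `M` in the same stack model: all runs from `(q, ⊥)` end in the same
state with the same stack content. -/
def SyncSame (M : DVPDA Q C I R Γ) (w : List (VLetter C I R)) : Prop :=
  ∃ (qbar : Q) (υ : List Γ), ∀ q : Q, M.run (q, []) w = (qbar, υ)

/-- `w` synchronizes `M` in the arbitrary stack model: all runs from `(q, ⊥)` end in the same
state, with arbitrary stack contents. -/
def SyncArb (M : DVPDA Q C I R Γ) (w : List (VLetter C I R)) : Prop :=
  ∃ qbar : Q, ∀ q : Q, (M.run (q, []) w).1 = qbar

end DVPDA

/-- The DVPDA constructed from a DFA `A = (Q, Σ, δ)` and a subset `S ⊆ Q` in the reduction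
from `DFA-Sync-Into-Subset` to `Sync-DVPDA-Same`: states `Q ∪ {q_S}` (`q_S = Sum.inr ()`),
one call letter `a`, internal letters `Σ`, no return letters, and stack symbols
`{s₊, s₋, ⊥}` (`s₊ = true`, `s₋ = false`).  Internal letters act as `δ` on `Q` and loop on
`q_S`; the call letter maps `q_S` and all states of `S` to `q_S` pushing `s₊`, and loops on
states outside `S` pushing `s₋`. -/
def syncIntoDVPDA {Q A : Type} (δ : Q → A → Q) (S : Set Q) [DecidablePred (· ∈ S)] :
    DVPDA (Q ⊕ Unit) Unit A Empty Bool where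
  δc := fun s _ => match s with
    | Sum.inr _ => (Sum.inr (), true)
    | Sum.inl p => if p ∈ S then (Sum.inr (), true) else (Sum.inl p, false)
  δi := fun s σ => match s with
    | Sum.inr _ => Sum.inr ()
    | Sum.inl p => Sum.inl (δ p σ)
  δr := fun _ e _ => e.elim

/-!
Without return letters a pushed symbol stays on the stack forever, so runs that end with the same
stack must push the same symbol at each call. If `Q ≠ ∅`, a synchronizing word has a call: internal
letters alone cannot bring a state of `Q` to `q_S`. If `u ∈ Σ*` is the part of the word before the
first call, then at this call `q_S` pushes `s₊`, hence so does every state of `δ(Q, u)`, which means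
`δ(Q, u) ⊆ S`. Conversely, if `δ(Q, u) ⊆ S`, then `u a` brings every state to `q_S` with stack `s₊`.
-/

theorem VLetter.exists_eq_map_int_or_eq_map_int_append_call {C I R : Type} [IsEmpty R]
    (w : List (VLetter C I R)) :
    ∃ u : List I, w = u.map .int ∨ ∃ c v, w = u.map .int ++ .call c :: v := by
  induction w with
  | nil => exact ⟨[], .inl rfl⟩
  | cons l w ih =>
    cases l with
    | call c => exact ⟨[], .inr ⟨c, w, rfl⟩⟩
    | int i =>
      obtain ⟨u, rfl | ⟨c, v, rfl⟩⟩ := ih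
      · exact ⟨i :: u, .inl rfl⟩
      · exact ⟨i :: u, .inr ⟨c, v, rfl⟩⟩
    | ret r => exact isEmptyElim r

namespace DVPDA

section Run

variable {Q C I R Γ : Type} (M : DVPDA Q C I R Γ)

theorem run_append (cfg : Q × List Γ) (u v : List (VLetter C I R)) :
    M.run cfg (u ++ v) = M.run (M.run cfg u) v :=
  List.foldl_append

theorem run_call_cons (q : Q) (s : List Γ) (c : C) (w : List (VLetter C I R)) :
    M.run (q, s) (.call c :: w) = M.run ((M.δc q c).1, (M.δc q c).2 :: s) w :=
  rfl

theorem run_map_int (q : Q) (s : List Γ) (u : List I) :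
    M.run (q, s) (u.map .int) = (u.foldl M.δi q, s) := by
  induction u generalizing q with
  | nil => rfl
  | cons i _ ih => exact ih (M.δi q i)

theorem run_map_int_append_call_cons (q : Q) (s : List Γ) (u : List I) (c : C)
    (v : List (VLetter C I R)) :
    M.run (q, s) (u.map .int ++ .call c :: v) =
      M.run ((M.δc (u.foldl M.δi q) c).1, (M.δc (u.foldl M.δi q) c).2 :: s) v := by
  rw [run_append, run_map_int, run_call_cons]

variable {M}

theorem SyncSame.append {u : List (VLetter C I R)} (hu : M.SyncSame u)
    (v : List (VLetter C I R)) : M.SyncSame (u ++ v) := by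
  obtain ⟨qbar, υ, hrun⟩ := hu
  exact ⟨_, _, fun q => by rw [run_append, hrun q]⟩

end Run

section NoReturn

variable {Q C I R Γ : Type} [IsEmpty R] {M : DVPDA Q C I R Γ}

theorem suffix_run_snd (q : Q) (s : List Γ) (w : List (VLetter C I R)) :
    s <:+ (M.run (q, s) w).2 := by
  induction w generalizing q s with
  | nil => exact List.suffix_rfl
  | cons l w ih =>
    cases l with
    | call c => exact (List.suffix_cons _ s).trans (ih _ _)
    | int i => exact ih _ _
    | ret r => exact isEmptyElim r

theorem eq_of_run_snd_eq {p q : Q} {s t : List Γ} {w : List (VLetter C I R)}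
    (hlen : s.length = t.length) (hrun : (M.run (p, s) w).2 = (M.run (q, t) w).2) : s = t := by
  have hs : s <:+ (M.run (q, t) w).2 := hrun ▸ suffix_run_snd p s w
  exact (List.suffix_of_suffix_length_le hs (suffix_run_snd q t w) hlen.le).eq_of_length hlen

theorem SyncSame.pushed_eq {u : List I} {c : C} {v : List (VLetter C I R)}
    (hsync : M.SyncSame (u.map .int ++ .call c :: v)) (p q : Q) :
    (M.δc (u.foldl M.δi p) c).2 = (M.δc (u.foldl M.δi q) c).2 := by
  obtain ⟨qbar, υ, hrun⟩ := hsync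
  simp only [run_map_int_append_call_cons] at hrun
  have hstack := congrArg Prod.snd ((hrun p).trans (hrun q).symm)
  exact List.head_eq_of_cons_eq (eq_of_run_snd_eq (by rfl) hstack)

end NoReturn

end DVPDA

namespace syncIntoDVPDA

open DVPDA

variable {Q A : Type} (δ : Q → A → Q) (S : Set Q) [DecidablePred (· ∈ S)]

theorem foldl_δi_inl (u : List A) (q : Q) :
    u.foldl (syncIntoDVPDA δ S).δi (.inl q) = .inl (u.foldl δ q) :=
  List.foldl_hom Sum.inl fun _ _ => rfl

theorem foldl_δi_inr (u : List A) :
    u.foldl (syncIntoDVPDA δ S).δi (.inr ()) = .inr () :=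
  List.foldl_fixed' (fun _ => rfl) u

variable {S} in
theorem δc_inl_of_mem {p : Q} (hp : p ∈ S) :
    (syncIntoDVPDA δ S).δc (.inl p) () = (.inr (), true) :=
  if_pos hp

theorem δc_inr : (syncIntoDVPDA δ S).δc (.inr ()) () = (.inr (), true) :=
  rfl

variable {S} in
theorem mem_of_δc_inl_snd {p : Q} (hp : ((syncIntoDVPDA δ S).δc (.inl p) ()).2 = true) :
    p ∈ S := by
  by_contra hpS
  simp [syncIntoDVPDA, hpS] at hp

variable {δ S}

theorem not_syncSame_map_int [Nonempty Q] (u : List A) :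
    ¬ (syncIntoDVPDA δ S).SyncSame (u.map .int) := by
  rintro ⟨qbar, υ, hrun⟩
  inhabit Q
  have hinl := hrun (.inl default)
  have hinr := hrun (.inr ())
  rw [run_map_int, foldl_δi_inl] at hinl
  rw [run_map_int, foldl_δi_inr] at hinr
  exact Sum.inl_ne_inr (congrArg Prod.fst (hinl.trans hinr.symm))

theorem syncSame_map_int_append_call (u : List A) (hu : ∀ q, u.foldl δ q ∈ S) :
    (syncIntoDVPDA δ S).SyncSame (u.map .int ++ [.call ()]) := by
  refine ⟨.inr (), [true], ?_⟩
  rintro (q | _)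
  · rw [run_map_int_append_call_cons, foldl_δi_inl, δc_inl_of_mem δ (hu q)]
    rfl
  · rw [run_map_int_append_call_cons, foldl_δi_inr, δc_inr]
    rfl

theorem syncSame_map_int_append_call_cons_iff {u : List A} {v : List (VLetter Unit A Empty)} :
    (syncIntoDVPDA δ S).SyncSame (u.map .int ++ .call () :: v) ↔ ∀ q, u.foldl δ q ∈ S := by
  constructor
  · intro hsync q
    have hpush := hsync.pushed_eq (.inl q) (.inr ())
    rw [foldl_δi_inl, foldl_δi_inr, δc_inr] at hpush
    exact mem_of_δc_inl_snd δ hpush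
  · intro hu
    simpa using (syncSame_map_int_append_call u hu).append v

end syncIntoDVPDA

open syncIntoDVPDA in
theorem syncIntoDVPDA_syncSame_iff_general
    {Q A : Type} (δ : Q → A → Q) (S : Set Q) [DecidablePred (· ∈ S)] :
    (∃ w : List (VLetter Unit A Empty), (syncIntoDVPDA δ S).SyncSame w) ↔
    (∃ w : List A, ∀ q : Q, w.foldl δ q ∈ S) := by
  constructor
  · rintro ⟨w, hsync⟩
    obtain ⟨u, rfl | ⟨_, v, rfl⟩⟩ := VLetter.exists_eq_map_int_or_eq_map_int_append_call w
    · refine ⟨u, fun q => ?_⟩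
      have : Nonempty Q := ⟨q⟩
      exact absurd hsync (not_syncSame_map_int u)
    · exact ⟨u, syncSame_map_int_append_call_cons_iff.mp hsync⟩
  · rintro ⟨u, hu⟩
    exact ⟨_, syncSame_map_int_append_call_cons_iff (v := []).mpr hu⟩

/-- The DVPDA `M` constructed from a DFA `A = (Q, Σ, δ)` and `S ⊆ Q` has a
synchronizing word in the same stack model iff there is a word `w ∈ Σ*` with
`δ(Q, w) ⊆ S`. -/
theorem syncIntoDVPDA_syncSame_iff
    {Q A : Type} [Fintype Q] (δ : Q → A → Q) (S : Set Q) [DecidablePred (· ∈ S)] :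
    (∃ w : List (VLetter Unit A Empty), (syncIntoDVPDA δ S).SyncSame w) ↔
    (∃ w : List A, ∀ q : Q, w.foldl δ q ∈ S) := by
  exact syncIntoDVPDA_syncSame_iff_general δ S
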